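/- Strong exponential decay for short propagators (Lemma 2.19, part 5, second bound): Fix κ ∈ (0,1). There exist constants c_κ, C_κ > 0, depending only on κ, d and C₀, such that for every integer L ≥ 2, every t ∈ [0,1), every E ∈ ℝ with |E| ≤ 2 − κ, every ξ ∈ {t·m(E)², t·conj(m(E))²}, and every a ∈ ℤ_L^d: |Θ^(B)_ξ(0,a)| ≤ C_κ · exp(−c_κ·|a|). -/

import Mathlib

/-- Periodic L¹ distance on the discrete torus `(ZMod n)^d`. -/
def torusDist {n d : ℕ} (x y : Fin d → ZMod n) : ℕ :=
  ∑ i, min (x i - y i).val (y i - x i).val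

/-- The block-level variance matrix `S^(B)` on `ℤ_L^d`, with coupling constant `λ`:
`S^(B)_{ab} = (1+2dλ²)⁻¹ 1_{a=b} + λ²(1+2dλ²)⁻¹ 1_{a∼b}`. -/
noncomputable def SBmat (d L : ℕ) [NeZero L] (lam : ℝ) :
    Matrix (Fin d → ZMod L) (Fin d → ZMod L) ℂ :=
  Matrix.of fun a b =>
    if a = b then ((1 / (1 + 2 * d * lam ^ 2) : ℝ) : ℂ)
    else if torusDist a b = 1 then ((lam ^ 2 / (1 + 2 * d * lam ^ 2) : ℝ) : ℂ)
    else 0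

/-- The propagator `Θ^(B)_ξ := (I − ξ·S^(B))⁻¹`. -/
noncomputable def ThetaB (d L : ℕ) [NeZero L] (lam : ℝ) (ξ : ℂ) :
    Matrix (Fin d → ZMod L) (Fin d → ZMod L) ℂ :=
  ((1 : Matrix (Fin d → ZMod L) (Fin d → ZMod L) ℂ) - ξ • SBmat d L lam)⁻¹

/-- The Stieltjes transform of the semicircle law at a real energy `E` with `|E| ≤ 2`:
`m(E) := (−E + i√(4−E²))/2`, so that `|m(E)| = 1`. -/
noncomputable def mSC (E : ℝ) : ℂ :=
  (-(E : ℂ) + Complex.I * ((Real.sqrt (4 - E ^ 2) : ℝ) : ℂ)) / 2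

/-! The spectrum of the self-adjoint matrix `S` lies in `[-1 + δ, 1]` by Gershgorin's theorem, and
`‖ξ‖ ≤ 1`, `Re ξ ≤ 1 - κ`, so `1 - ξ s` stays away from `0` for `s` in this interval. Hence
`A = 1 - ξ S` has norm at most `K = 2` and an inverse bounded uniformly in the volume.

Exponential decay then follows as for any banded matrix with bounded condition number
(Demko–Moss–Smith). The matrix `M = 1 - K⁻² A* A` has norm at most some `q < 1`, and
`A⁻¹ = ∑ k < N, M ^ k K⁻² A* + M ^ N A⁻¹`. The sum over `k` has bandwidth linear in `N`, so an entry
of `A⁻¹` at larger distance is an entry of `M ^ N A⁻¹`, of size at most `q ^ N ‖A⁻¹‖`. -/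

open scoped Matrix.Norms.L2Operator Ring

/-! ### Norms and spectra in C⋆-algebras -/

section CStarAlgebra

variable {B : Type*} [CStarAlgebra B]

lemma spectrum_star_mul_self_subset_Icc [Nontrivial B] (u : Bˣ) :
    spectrum ℝ (star (u : B) * u) ⊆ Set.Icc (‖(↑u⁻¹ : B)‖ ^ 2)⁻¹ (‖(u : B)‖ ^ 2) := by
  intro x hx
  have hx0 : 0 ≤ x := spectrum_star_mul_self_nonneg x hx
  have hxne : x ≠ 0 := by
    rintro rfl
    exact spectrum.zero_notMem ℝ (star u * u).isUnit hx
  have hinv : x⁻¹ ∈ spectrum ℝ (↑u⁻¹ * star (↑u⁻¹ : B)) := by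
    simpa [mul_inv_rev] using
      (spectrum.inv_mem_iff (r := Units.mk0 x hxne) (a := star u * u)).1 hx
  have hle := spectrum.norm_le_norm_of_mem hx
  have hle' := spectrum.norm_le_norm_of_mem hinv
  rw [CStarRing.norm_star_mul_self, ← sq, Real.norm_of_nonneg hx0] at hle
  rw [CStarRing.norm_self_mul_star, ← sq, Real.norm_of_nonneg (inv_nonneg.2 hx0)] at hle'
  exact ⟨inv_le_of_inv_le₀ (hx0.lt_of_ne' hxne) hle', hle⟩

lemma norm_one_sub_smul_star_mul_self_le [Nontrivial B] (u : Bˣ) {K G : ℝ} (hK : ‖(u : B)‖ ≤ K)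
    (hG : ‖(↑u⁻¹ : B)‖ ≤ G) :
    ‖1 - (K ^ 2)⁻¹ • (star (u : B) * u)‖ ≤ 1 - ((K * G) ^ 2)⁻¹ := by
  have hu : 0 < ‖(u : B)‖ := norm_pos_iff.2 u.ne_zero
  have hu' : 0 < ‖(↑u⁻¹ : B)‖ := norm_pos_iff.2 u⁻¹.ne_zero
  have hK0 : 0 < K := hu.trans_le hK
  have hKG : 1 ≤ K * G :=
    calc 1 = ‖(u : B) * ↑u⁻¹‖ := by rw [Units.mul_inv, norm_one]
      _ ≤ ‖(u : B)‖ * ‖(↑u⁻¹ : B)‖ := norm_mul_le _ _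
      _ ≤ K * G := by gcongr
  have hcfc : cfc (fun x : ℝ => 1 - (K ^ 2)⁻¹ * x) (star (u : B) * u) =
      1 - (K ^ 2)⁻¹ • (star (u : B) * u) := by
    rw [cfc_sub _ _, cfc_const_one ℝ _, cfc_const_mul_id _ _]
  rw [← hcfc]
  refine norm_cfc_le (sub_nonneg.2 (inv_le_one_of_one_le₀ (one_le_pow₀ hKG))) fun x hx => ?_
  obtain ⟨hx₁, hx₂⟩ := spectrum_star_mul_self_subset_Icc u hx
  have hlower : ((K * G) ^ 2)⁻¹ ≤ (K ^ 2)⁻¹ * x :=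
    calc ((K * G) ^ 2)⁻¹ = (K ^ 2)⁻¹ * (G ^ 2)⁻¹ := by rw [mul_pow, mul_inv]
      _ ≤ (K ^ 2)⁻¹ * (‖(↑u⁻¹ : B)‖ ^ 2)⁻¹ := by gcongr
      _ ≤ (K ^ 2)⁻¹ * x := by gcongr
  have hupper : (K ^ 2)⁻¹ * x ≤ 1 :=
    calc (K ^ 2)⁻¹ * x ≤ (K ^ 2)⁻¹ * K ^ 2 := by gcongr; exact hx₂.trans (by gcongr)
      _ = 1 := inv_mul_cancel₀ (by positivity)
  rw [Real.norm_of_nonneg (sub_nonneg.2 hupper)]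
  linarith

lemma norm_inverse_cfc_le {f : ℂ → ℂ} {a : B} [IsStarNormal a] {g : ℝ} (hg : 0 < g)
    (hf : ContinuousOn f (spectrum ℂ a)) (h : ∀ z ∈ spectrum ℂ a, g ≤ ‖f z‖) :
    ‖(cfc f a)⁻¹ʳ‖ ≤ g⁻¹ := by
  rw [← cfc_inv f a fun z hz => norm_pos_iff.1 (hg.trans_le (h z hz))]
  refine norm_cfc_le (inv_nonneg.2 hg.le) fun z hz => ?_
  rw [norm_inv]
  exact inv_anti₀ hg (h z hz)

end CStarAlgebra

/-! ### Inverses of banded matrices -/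

/-- A matrix is banded with width `r`, relative to a pseudometric `ρ` on its index set, if its
entries at distance more than `r` vanish. -/
def IsBanded {n R : Type*} [Zero R] (ρ : PseudoMetric n ℕ) (r : ℕ) (A : Matrix n n R) : Prop :=
  ∀ i j, r < ρ i j → A i j = 0

namespace IsBanded

variable {n R : Type*} {ρ : PseudoMetric n ℕ} {r s : ℕ}

lemma smul {S : Type*} [Zero R] [SMulZeroClass S R] {A : Matrix n n R} (hA : IsBanded ρ r A)
    (c : S) : IsBanded ρ r (c • A) :=
  fun i j hij => by rw [Matrix.smul_apply, hA i j hij, smul_zero]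

lemma sub [AddGroup R] {A A' : Matrix n n R} (hA : IsBanded ρ r A) (hA' : IsBanded ρ r A') :
    IsBanded ρ r (A - A') :=
  fun i j hij => by rw [Matrix.sub_apply, hA i j hij, hA' i j hij, sub_zero]

lemma conjTranspose [AddMonoid R] [StarAddMonoid R] {A : Matrix n n R} (hA : IsBanded ρ r A) :
    IsBanded ρ r A.conjTranspose :=
  fun i j hij => by rw [Matrix.conjTranspose_apply, hA j i (by rwa [ρ.symm]), star_zero]

lemma one [DecidableEq n] [Zero R] [One R] : IsBanded ρ r (1 : Matrix n n R) := by
  intro i j hij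
  refine Matrix.one_apply_ne ?_
  rintro rfl
  simp at hij

variable [Fintype n]

lemma mul [NonUnitalNonAssocSemiring R] {A A' : Matrix n n R} (hA : IsBanded ρ r A)
    (hA' : IsBanded ρ s A') : IsBanded ρ (r + s) (A * A') := by
  intro i j hij
  rw [Matrix.mul_apply]
  refine Finset.sum_eq_zero fun k _ => ?_
  have htri : ρ i j ≤ ρ i k + ρ k j := ρ.triangle i k j
  by_cases hik : r < ρ i k
  · rw [hA i k hik, zero_mul]
  · rw [hA' k j (by omega), mul_zero]

lemma pow [DecidableEq n] [Semiring R] {A : Matrix n n R} (hA : IsBanded ρ r A) (k : ℕ) :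
    IsBanded ρ (r * k) (A ^ k) := by
  induction k with
  | zero => exact one
  | succ k ih => rw [pow_succ, Nat.mul_succ]; exact ih.mul hA

end IsBanded

lemma norm_apply_le_l2_opNorm {𝕜 m n : Type*} [RCLike 𝕜] [Fintype m] [Fintype n]
    [DecidableEq n] (A : Matrix m n 𝕜) (i : m) (j : n) : ‖A i j‖ ≤ ‖A‖ := by
  let e : EuclideanSpace 𝕜 n := EuclideanSpace.single j 1
  have hcol : A.mulVec e.ofLp i = A i j := by simp [e]
  calc ‖A i j‖ ≤ ‖(EuclideanSpace.equiv m 𝕜).symm (A.mulVec e.ofLp)‖ := by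
        rw [← hcol]
        exact PiLp.norm_apply_le ((EuclideanSpace.equiv m 𝕜).symm (A.mulVec e.ofLp)) i
    _ ≤ ‖A‖ * ‖e‖ := A.l2_opNorm_mulVec e
    _ = ‖A‖ := by simp [e]

lemma eq_sum_pow_mul_add_pow_mul_of_mul_eq_one {R : Type*} [Ring R] {a b : R} (h : a * b = 1)
    (c : R) (N : ℕ) :
    b = ∑ k ∈ Finset.range N, (1 - c * a) ^ k * c + (1 - c * a) ^ N * b := by
  have hc : (1 - (1 - c * a)) * b = c := by rw [sub_sub_cancel, mul_assoc, h, mul_one]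
  generalize 1 - c * a = M at hc ⊢
  rw [← Finset.sum_mul, ← hc, ← mul_assoc, geom_sum_mul_neg, sub_mul, one_mul, sub_add_cancel]

/-- For `r = 0` the exponent is `0`, since `m / 0 = 0` in `ℕ`. -/
theorem IsBanded.norm_inv_apply_le {n : Type*} [Fintype n] [DecidableEq n] {ρ : PseudoMetric n ℕ}
    {r : ℕ} {A : Matrix n n ℂ} (hA : IsBanded ρ r A) (hunit : IsUnit A) {K G : ℝ} (hK : ‖A‖ ≤ K)
    (hG : ‖A⁻¹‖ ≤ G) (i j : n) :
    ‖A⁻¹ i j‖ ≤ (1 - ((K * G) ^ 2)⁻¹) ^ (ρ i j / (2 * r)) * G := by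
  have : Nonempty n := ⟨i⟩
  obtain ⟨u, rfl⟩ := hunit
  rw [← Matrix.coe_units_inv] at hG ⊢
  set c : Matrix n n ℂ := (K ^ 2)⁻¹ • star (u : Matrix n n ℂ)
  set M := 1 - c * u
  set N := ρ i j / (2 * r)
  have hM : ‖M‖ ≤ 1 - ((K * G) ^ 2)⁻¹ := by
    simpa only [M, c, smul_mul_assoc] using norm_one_sub_smul_star_mul_self_le u hK hG
  have hc : IsBanded ρ r c := hA.conjTranspose.smul _
  have hMband : IsBanded ρ (2 * r) M := by
    rw [two_mul]
    exact IsBanded.one.sub (hc.mul hA)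
  have hnear : (∑ k ∈ Finset.range N, M ^ k * c) i j = 0 := by
    rw [Matrix.sum_apply]
    refine Finset.sum_eq_zero fun k hk => (hMband.pow k).mul hc i j ?_
    have hkN : 2 * r * (k + 1) ≤ ρ i j :=
      (Nat.mul_le_mul_left _ (Finset.mem_range.1 hk)).trans (Nat.mul_div_le _ _)
    have hr : r ≠ 0 := by
      rintro rfl
      simp [N] at hk
    linarith [Nat.pos_of_ne_zero hr]
  have hentry : (↑u⁻¹ : Matrix n n ℂ) i j = (M ^ N * (↑u⁻¹ : Matrix n n ℂ)) i j := by
    conv_lhs => rw [eq_sum_pow_mul_add_pow_mul_of_mul_eq_one u.mul_inv c N]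
    rw [Matrix.add_apply, hnear, zero_add]
  calc ‖(↑u⁻¹ : Matrix n n ℂ) i j‖ ≤ ‖M ^ N * (↑u⁻¹ : Matrix n n ℂ)‖ := by
        rw [hentry]
        exact norm_apply_le_l2_opNorm _ i j
    _ ≤ ‖M‖ ^ N * ‖(↑u⁻¹ : Matrix n n ℂ)‖ :=
        (norm_mul_le _ _).trans (by gcongr; exact norm_pow_le _ _)
    _ ≤ (1 - ((K * G) ^ 2)⁻¹) ^ N * G := by
        gcongr
        exact pow_nonneg ((norm_nonneg _).trans hM) N

theorem IsBanded.norm_inv_one_sub_smul_apply_le {n : Type*} [Fintype n] [DecidableEq n]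
    {ρ : PseudoMetric n ℕ} {r : ℕ} {S : Matrix n n ℂ} [IsStarNormal S] (hS : IsBanded ρ r S)
    {ξ : ℂ} {g K : ℝ} (hg : 0 < g)
    (hspec : ∀ z ∈ spectrum ℂ S, g ≤ ‖1 - ξ * z‖ ∧ ‖1 - ξ * z‖ ≤ K) (i j : n) :
    ‖(1 - ξ • S)⁻¹ i j‖ ≤ (1 - ((K * g⁻¹) ^ 2)⁻¹) ^ (ρ i j / (2 * r)) * g⁻¹ := by
  have : Nonempty n := ⟨i⟩
  have hcfc : cfc (fun z : ℂ => 1 - ξ * z) S = 1 - ξ • S := by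
    rw [cfc_sub _ _, cfc_const_one ℂ S, cfc_const_mul_id ξ S]
  have hunit : IsUnit (1 - ξ • S) := by
    rw [← hcfc, isUnit_cfc_iff _ S]
    exact fun z hz => norm_pos_iff.1 (hg.trans_le (hspec z hz).1)
  have hnorm : ‖1 - ξ • S‖ ≤ K := by
    obtain ⟨z, hz⟩ := spectrum.nonempty S
    have hK : 0 ≤ K := (norm_nonneg _).trans (hspec z hz).2
    exact hcfc ▸ norm_cfc_le hK fun z hz => (hspec z hz).2
  have hinv : ‖(1 - ξ • S)⁻¹‖ ≤ g⁻¹ := by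
    rw [Matrix.nonsing_inv_eq_ringInverse, ← hcfc]
    exact norm_inverse_cfc_le hg (by fun_prop) fun z hz => (hspec z hz).1
  exact (IsBanded.one.sub (hS.smul ξ)).norm_inv_apply_le hunit hnorm hinv i j

/-! ### The discrete torus -/

section Torus

variable {d n : ℕ} [NeZero n]

lemma torusDist_eq_sum_natAbs (x y : Fin d → ZMod n) :
    torusDist x y = ∑ i, (x i - y i).valMinAbs.natAbs := by
  refine Finset.sum_congr rfl fun i _ => ?_
  rw [ZMod.valMinAbs_natAbs_eq_min, ← neg_sub (x i) (y i), ZMod.neg_val]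
  split_ifs with h
  · simp [h]
  · rfl

/-- The distance `torusDist` as a bundled pseudometric. -/
def torusPseudoMetric (d n : ℕ) [NeZero n] : PseudoMetric (Fin d → ZMod n) ℕ where
  toFun := torusDist
  refl' x := by simp [torusDist]
  symm' x y := Finset.sum_congr rfl fun i _ => min_comm _ _
  triangle' x y z := by
    simp only [torusDist_eq_sum_natAbs, ← Finset.sum_add_distrib]
    refine Finset.sum_le_sum fun i _ => ?_
    rw [← sub_add_sub_cancel (x i) (y i) (z i)]
    exact (ZMod.natAbs_valMinAbs_add_le _ _).trans (Int.natAbs_add_le _ _)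

lemma exists_eq_add_single_of_torusDist_eq_one {x y : Fin d → ZMod n} (h : torusDist y x = 1) :
    ∃ (i : Fin d) (ε : ℤˣ), x + Pi.single i ((ε : ℤ) : ZMod n) = y := by
  rw [torusDist_eq_sum_natAbs] at h
  obtain ⟨i, -, hi⟩ := Finset.exists_ne_zero_of_sum_ne_zero (h.trans_ne one_ne_zero)
  rw [← Finset.add_sum_erase _ _ (Finset.mem_univ i)] at h
  have hi_one : (y i - x i).valMinAbs.natAbs = 1 := by omega
  have hrest : ∑ j ∈ Finset.univ.erase i, (y j - x j).valMinAbs.natAbs = 0 := by omega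
  obtain ⟨ε, hε⟩ := Int.isUnit_iff_natAbs_eq.2 hi_one
  refine ⟨i, ε, funext fun j => ?_⟩
  rcases eq_or_ne j i with rfl | hji
  · rw [hε, ZMod.coe_valMinAbs, Pi.add_apply, Pi.single_eq_same, add_sub_cancel]
  · have hj := Finset.sum_eq_zero_iff.1 hrest j (by simp [hji])
    rw [Int.natAbs_eq_zero, ZMod.valMinAbs_eq_zero, sub_eq_zero] at hj
    simp [hji, hj]

lemma card_torusDist_eq_one_le (x : Fin d → ZMod n) :
    (Finset.univ.filter fun y => torusDist x y = 1).card ≤ 2 * d :=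
  calc (Finset.univ.filter fun y => torusDist x y = 1).card
      ≤ (Finset.univ.image fun p : Fin d × ℤˣ =>
          x + Pi.single p.1 ((p.2 : ℤ) : ZMod n)).card := by
        refine Finset.card_le_card fun y hy => ?_
        have hyx : torusDist y x = 1 :=
          ((torusPseudoMetric d n).symm y x).trans (Finset.mem_filter.1 hy).2
        obtain ⟨i, ε, h⟩ := exists_eq_add_single_of_torusDist_eq_one hyx
        exact Finset.mem_image.2 ⟨(i, ε), Finset.mem_univ _, h⟩
    _ ≤ (Finset.univ : Finset (Fin d × ℤˣ)).card := Finset.card_image_le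
    _ = 2 * d := by simp [mul_comm]

end Torus

/-! ### The variance matrix and its propagator -/

lemma exists_mem_closedBall_of_mem_spectrum {n K : Type*} [Fintype n] [DecidableEq n]
    [NormedField K] {A : Matrix n n K} {μ : K} (hμ : μ ∈ spectrum K A) :
    ∃ k, μ ∈ Metric.closedBall (A k k) (∑ j ∈ Finset.univ.erase k, ‖A k j‖) := by
  rw [← Matrix.spectrum_toLin', ← Module.End.hasEigenvalue_iff_mem_spectrum] at hμ
  exact eigenvalue_mem_ball hμ

section SBmat

variable {d L : ℕ} [NeZero L]

lemma isSelfAdjoint_SBmat (lam : ℝ) : IsSelfAdjoint (SBmat d L lam) := by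
  ext a b
  have hsymm : torusDist b a = torusDist a b := (torusPseudoMetric d L).symm b a
  simp only [Matrix.star_apply, SBmat, Matrix.of_apply, hsymm, eq_comm (a := b)]
  split_ifs <;> simp

lemma isBanded_SBmat (lam : ℝ) : IsBanded (torusPseudoMetric d L) 1 (SBmat d L lam) := by
  intro a b hab
  have hne : a ≠ b := by
    rintro rfl
    simp at hab
  have hdist : torusDist a b ≠ 1 := hab.ne'
  simp [SBmat, hne, hdist]

lemma sum_norm_SBmat_erase_le (lam : ℝ) (a : Fin d → ZMod L) :
    ∑ b ∈ Finset.univ.erase a, ‖SBmat d L lam a b‖ ≤ 1 - 1 / (1 + 2 * d * lam ^ 2) := by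
  set w := lam ^ 2 / (1 + 2 * d * lam ^ 2) with hw
  have hw0 : 0 ≤ w := by positivity
  calc ∑ b ∈ Finset.univ.erase a, ‖SBmat d L lam a b‖
      = ∑ b ∈ Finset.univ.erase a, if torusDist a b = 1 then w else 0 := by
        refine Finset.sum_congr rfl fun b hb => ?_
        rw [SBmat, Matrix.of_apply, if_neg (Finset.ne_of_mem_erase hb).symm, apply_ite norm,
          norm_zero, Complex.norm_real, Real.norm_of_nonneg hw0]
    _ ≤ ∑ b, if torusDist a b = 1 then w else 0 :=
        Finset.sum_le_sum_of_subset_of_nonneg (Finset.subset_univ _)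
          fun b _ _ => ite_nonneg hw0 le_rfl
    _ = (Finset.univ.filter fun b => torusDist a b = 1).card * w := by
        rw [← Finset.sum_filter, Finset.sum_const, nsmul_eq_mul]
    _ ≤ (2 * d : ℕ) * w := by
        gcongr
        exact card_torusDist_eq_one_le a
    _ = 1 - 1 / (1 + 2 * d * lam ^ 2) := by
        rw [hw]
        push_cast
        field_simp
        ring

lemma exists_mem_Icc_of_mem_spectrum_SBmat {lam : ℝ} {z : ℂ} (hz : z ∈ spectrum ℂ (SBmat d L lam)) :
    ∃ s ∈ Set.Icc (-1 + 2 / (1 + 2 * d * lam ^ 2) : ℝ) 1, z = (s : ℂ) := by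
  have hre : z = (z.re : ℂ) := (isSelfAdjoint_SBmat lam).mem_spectrum_eq_re hz
  refine ⟨z.re, ?_, hre⟩
  obtain ⟨a, ha⟩ := exists_mem_closedBall_of_mem_spectrum hz
  have hdiag : SBmat d L lam a a = ((1 / (1 + 2 * d * lam ^ 2) : ℝ) : ℂ) := if_pos rfl
  rw [hre, hdiag, Metric.mem_closedBall, Complex.dist_eq, ← Complex.ofReal_sub, Complex.norm_real,
    Real.norm_eq_abs] at ha
  obtain ⟨h₁, h₂⟩ := abs_le.1 (ha.trans (sum_norm_SBmat_erase_le lam a))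
  rw [Set.mem_Icc, ← one_add_one_eq_two, add_div]
  constructor <;> linarith

lemma min_le_norm_one_sub_mul {κ δ s : ℝ} {ξ : ℂ} (hs : s ∈ Set.Icc (-1 + δ) 1) (hξ : ‖ξ‖ ≤ 1)
    (hre : ξ.re ≤ 1 - κ) : min (min 1 κ) δ ≤ ‖1 - ξ * s‖ := by
  rcases le_total 0 s with hs0 | hs0
  · refine (min_le_left _ _).trans ?_
    calc min 1 κ = (1 - s) * min 1 κ + s * min 1 κ := by ring
      _ ≤ (1 - s) * 1 + s * κ := by
        gcongr
        exacts [sub_nonneg.2 hs.2, min_le_left _ _, min_le_right _ _]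
      _ ≤ (1 - ξ * s).re := by
        rw [Complex.sub_re, Complex.one_re, Complex.re_mul_ofReal]
        nlinarith
      _ ≤ ‖1 - ξ * s‖ := Complex.re_le_norm _
  · refine (min_le_right _ _).trans ?_
    calc δ ≤ 1 - 1 * |s| := by rw [abs_of_nonpos hs0]; linarith [hs.1]
      _ ≤ 1 - ‖ξ‖ * |s| := by gcongr
      _ = ‖(1 : ℂ)‖ - ‖ξ * s‖ := by rw [norm_one, norm_mul, Complex.norm_real, Real.norm_eq_abs]
      _ ≤ ‖1 - ξ * s‖ := norm_sub_norm_le _ _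

theorem norm_ThetaB_apply_le {lam g : ℝ} {ξ : ℂ} (hξ : ‖ξ‖ ≤ 1) (hg : 0 < g)
    (hgap : ∀ s ∈ Set.Icc (-1 + 2 / (1 + 2 * d * lam ^ 2) : ℝ) 1, g ≤ ‖1 - ξ * (s : ℂ)‖)
    (a b : Fin d → ZMod L) :
    ‖ThetaB d L lam ξ a b‖ ≤ (1 - ((2 * g⁻¹) ^ 2)⁻¹) ^ (torusDist a b / 2) * g⁻¹ := by
  have hnormal : IsStarNormal (SBmat d L lam) := (isSelfAdjoint_SBmat lam).isStarNormal
  refine (isBanded_SBmat lam).norm_inv_one_sub_smul_apply_le (K := 2) hg (fun z hz => ?_) a b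
  obtain ⟨s, hs, rfl⟩ := exists_mem_Icc_of_mem_spectrum_SBmat hz
  refine ⟨hgap s hs, ?_⟩
  have hδ : 0 < 2 / (1 + 2 * d * lam ^ 2) := by positivity
  have hs_norm : ‖(s : ℂ)‖ ≤ 1 := by
    rw [Complex.norm_real, Real.norm_eq_abs, abs_le]
    exact ⟨by linarith [hs.1], hs.2⟩
  calc ‖1 - ξ * s‖ ≤ ‖(1 : ℂ)‖ + ‖ξ‖ * ‖(s : ℂ)‖ := norm_mul ξ s ▸ norm_sub_le _ _
    _ ≤ 1 + 1 * 1 := by rw [norm_one]; gcongr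
    _ = 2 := by norm_num

end SBmat

lemma pow_div_le_inv_mul_exp {q : ℝ} (hq0 : 0 < q) (hq1 : q ≤ 1) (m k : ℕ) :
    q ^ (m / k) ≤ q⁻¹ * Real.exp (Real.log q / k * m) := by
  have hfloor : (m : ℝ) / k - 1 ≤ (m / k : ℕ) := by
    rw [← Nat.floor_div_eq_div (K := ℝ)]
    exact (Nat.sub_one_lt_floor _).le
  calc q ^ (m / k) = q ^ ((m / k : ℕ) : ℝ) := (Real.rpow_natCast _ _).symm
    _ ≤ q ^ ((m : ℝ) / k - 1) := Real.rpow_le_rpow_of_exponent_ge hq0 hq1 hfloor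
    _ = q⁻¹ * Real.exp (Real.log q / k * m) := by
      rw [Real.rpow_sub_one hq0.ne', Real.rpow_def_of_pos hq0, div_eq_inv_mul]
      ring_nf

theorem propagator_short_range_decay_general (d : ℕ) (C₀ : ℝ) {κ : ℝ} (hκ : 0 < κ) :
    ∃ c : ℝ, 0 < c ∧ ∃ C : ℝ, 0 < C ∧
      ∀ (L : ℕ) [NeZero L] (lam : ℝ), |lam| ≤ C₀ →
        ∀ ξ : ℂ, ‖ξ‖ ≤ 1 → ξ.re ≤ 1 - κ →
          ∀ a b : Fin d → ZMod L,
            ‖ThetaB d L lam ξ a b‖ ≤ C * Real.exp (-c * (torusDist a b : ℝ)) := by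
  set g := min (min 1 κ) (2 / (1 + 2 * d * C₀ ^ 2))
  have hg0 : 0 < g := by positivity
  have hg1 : g ≤ 1 := (min_le_left _ _).trans (min_le_left _ _)
  set q := 1 - ((2 * g⁻¹) ^ 2)⁻¹
  have hq0 : 0 < q := sub_pos.2 <| inv_lt_one_of_one_lt₀ <| one_lt_pow₀
    (by linarith [one_le_inv_iff₀.2 ⟨hg0, hg1⟩]) two_ne_zero
  have hq1 : q < 1 := sub_lt_self 1 (by positivity)
  refine ⟨-(Real.log q / 2), by linarith [Real.log_neg hq0 hq1], q⁻¹ * g⁻¹, by positivity, ?_⟩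
  intro L _ lam hlam ξ hξ hre a b
  have hδ : 2 / (1 + 2 * d * C₀ ^ 2) ≤ 2 / (1 + 2 * d * lam ^ 2) := by
    have hsq : lam ^ 2 ≤ C₀ ^ 2 := sq_le_sq' (abs_le.1 hlam).1 (abs_le.1 hlam).2
    gcongr
  have hgap : ∀ s ∈ Set.Icc (-1 + 2 / (1 + 2 * d * lam ^ 2) : ℝ) 1, g ≤ ‖1 - ξ * (s : ℂ)‖ :=
    fun s hs => min_le_norm_one_sub_mul ⟨by linarith [hs.1], hs.2⟩ hξ hre
  calc ‖ThetaB d L lam ξ a b‖ ≤ q ^ (torusDist a b / 2) * g⁻¹ :=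
        norm_ThetaB_apply_le hξ hg0 hgap a b
    _ ≤ q⁻¹ * Real.exp (Real.log q / (2 : ℕ) * torusDist a b) * g⁻¹ := by
      gcongr
      exact pow_div_le_inv_mul_exp hq0 hq1.le _ 2
    _ = q⁻¹ * g⁻¹ * Real.exp (-(-(Real.log q / 2)) * torusDist a b) := by
      rw [neg_neg, Nat.cast_ofNat]
      ring

/-! ### Semicircle spectral parameters -/

lemma mSC_re (E : ℝ) : (mSC E).re = -E / 2 := by simp [mSC]

lemma norm_mSC {E : ℝ} (hE : |E| ≤ 2) : ‖mSC E‖ = 1 := by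
  have him : (mSC E).im = √(4 - E ^ 2) / 2 := by simp [mSC]
  have hsq : √(4 - E ^ 2) ^ 2 = 4 - E ^ 2 := Real.sq_sqrt (by nlinarith [abs_le.1 hE])
  rw [← sq_eq_sq₀ (norm_nonneg _) zero_le_one, Complex.sq_norm, Complex.normSq_apply, mSC_re, him]
  linarith

lemma re_mSC_sq {E : ℝ} (hE : |E| ≤ 2) : (mSC E ^ 2).re = E ^ 2 / 2 - 1 := by
  have hnorm := Complex.sq_norm (mSC E)
  rw [norm_mSC hE, Complex.normSq_apply, mSC_re] at hnorm
  rw [sq, Complex.mul_re, mSC_re]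
  linarith

lemma norm_le_one_and_re_le_of_mem_pair {κ t E : ℝ} {ξ : ℂ} (hκ0 : 0 < κ) (hκ1 : κ ≤ 1)
    (ht0 : 0 ≤ t) (ht1 : t ≤ 1) (hE : |E| ≤ 2 - κ)
    (hξ : ξ ∈ ({(t : ℂ) * mSC E ^ 2, (t : ℂ) * (starRingEnd ℂ) (mSC E) ^ 2} : Set ℂ)) :
    ‖ξ‖ ≤ 1 ∧ ξ.re ≤ 1 - κ := by
  have hE2 : |E| ≤ 2 := by linarith
  have hm : ‖mSC E‖ = 1 := norm_mSC hE2
  have hre : t * (mSC E ^ 2).re ≤ 1 - κ := by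
    have hEE : E ^ 2 ≤ (2 - κ) ^ 2 := sq_le_sq' (abs_le.1 hE).1 (abs_le.1 hE).2
    rw [re_mSC_sq hE2]
    calc t * (E ^ 2 / 2 - 1) ≤ t * (1 - κ) := mul_le_mul_of_nonneg_left (by nlinarith) ht0
      _ ≤ 1 - κ := mul_le_of_le_one_left (sub_nonneg.2 hκ1) ht1
  rcases hξ with rfl | rfl
  · rw [Complex.re_ofReal_mul]
    exact ⟨by simpa [hm, abs_of_nonneg ht0], hre⟩
  · rw [← map_pow, Complex.re_ofReal_mul, Complex.conj_re]
    exact ⟨by simpa [hm, abs_of_nonneg ht0], hre⟩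

/-- **Strong exponential decay for short propagators (Lemma 2.19, part 5, second bound).**
Fix `κ ∈ (0,1)`.  There are constants `c_κ, C_κ > 0`, depending only on `κ, d, C₀`, such
that for every `L ≥ 2`, `t ∈ [0,1)`, `E ∈ ℝ` with `|E| ≤ 2 − κ`,
`ξ ∈ {t·m(E)², t·conj(m(E))²}` and `a ∈ ℤ_L^d`: `|Θ^(B)_ξ(0,a)| ≤ C_κ·exp(−c_κ·|a|)`. -/
theorem propagator_short_range_decay (d : ℕ) (hd : 3 ≤ d) (C₀ : ℝ) (hC₀ : 1 ≤ C₀)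
    (κ : ℝ) (hκ0 : 0 < κ) (hκ1 : κ < 1) :
    ∃ c : ℝ, 0 < c ∧ ∃ C : ℝ, 0 < C ∧
      ∀ (L : ℕ) [NeZero L], 2 ≤ L →
        ∀ lam : ℝ, C₀⁻¹ ≤ lam → lam ≤ C₀ →
          ∀ t : ℝ, 0 ≤ t → t < 1 →
            ∀ E : ℝ, |E| ≤ 2 - κ →
              ∀ ξ ∈ ({(t : ℂ) * mSC E ^ 2,
                       (t : ℂ) * (starRingEnd ℂ) (mSC E) ^ 2} : Set ℂ),
                ∀ a : Fin d → ZMod L,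
                  ‖ThetaB d L lam ξ 0 a‖ ≤
                    C * Real.exp (-c * (torusDist 0 a : ℝ)) := by
  obtain ⟨c, hc, C, hC, hdecay⟩ := propagator_short_range_decay_general d C₀ hκ0
  refine ⟨c, hc, C, hC, fun L _ _ lam hlam₁ hlam₂ t ht0 ht1 E hE ξ hξ a => ?_⟩
  have hlam0 : 0 ≤ lam := (inv_nonneg.2 (zero_le_one.trans hC₀)).trans hlam₁
  obtain ⟨hnorm, hre⟩ := norm_le_one_and_re_le_of_mem_pair hκ0 hκ1.le ht0 ht1.le hE hξ
  exact hdecay L lam ((abs_of_nonneg hlam0).trans_le hlam₂) ξ hnorm hre 0 a
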